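/- arXiv:2503.01644 — 5 statements merged into one kernel-verified Lean document; each statement's English description precedes it below -/
import Mathlib

section
/- Let P₂ be a meet-semilattice with least element 0 and let P₁ ⊆ P₂ be a meet-subsemilattice containing 0 that preserves finite covers. Let F be a tight filter of P₂ with F ∩ P₁ ≠ ∅. Then F ∩ P₁ is a tight filter of P₁: it is a filter of P₁, and for every x ∈ F ∩ P₁ and every finite cover C of x within P₁, at least one element of C belongs to F ∩ P₁. -/
/-- A filter of a meet-semilattice with 0: nonempty, proper, upward closed,
and closed under meets. -/
def MeetFilter {P : Type*} [SemilatticeInf P] (F : Set P) : Prop :=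
  F.Nonempty ∧ F ≠ Set.univ ∧ (∀ x ∈ F, ∀ y : P, x ≤ y → y ∈ F) ∧
    ∀ x ∈ F, ∀ y ∈ F, x ⊓ y ∈ F

/-- A filter of the meet-subsemilattice `Q` of `P`. -/
def MeetFilterIn {P : Type*} [SemilatticeInf P] (Q : Set P) (F : Set P) : Prop :=
  F ⊆ Q ∧ F.Nonempty ∧ F ≠ Q ∧ (∀ x ∈ F, ∀ z ∈ Q, x ≤ z → z ∈ F) ∧
    ∀ x ∈ F, ∀ y ∈ F, x ⊓ y ∈ F

/-- `C` is a finite cover of `x` within the meet-subsemilattice `Q ⊆ P`. -/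
def FinCoverIn {P : Type*} [SemilatticeInf P] [OrderBot P]
    (Q : Set P) (x : P) (C : Finset P) : Prop :=
  (↑C : Set P) ⊆ Q ∧ (∀ c ∈ C, c ≤ x) ∧
    ∀ y ∈ Q, y ≠ ⊥ → y ≤ x → ∃ c ∈ C, c ⊓ y ≠ ⊥

/-- `C` is a finite cover of `x` within the whole meet-semilattice `P`. -/
def FinCover {P : Type*} [SemilatticeInf P] [OrderBot P] (x : P) (C : Finset P) : Prop :=
  (∀ c ∈ C, c ≤ x) ∧ ∀ y : P, y ≠ ⊥ → y ≤ x → ∃ c ∈ C, c ⊓ y ≠ ⊥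

theorem stmt3 {P : Type*} [SemilatticeInf P] [OrderBot P]
    (P₁ : Set P) (hbot : ⊥ ∈ P₁) (hinf : ∀ x ∈ P₁, ∀ y ∈ P₁, x ⊓ y ∈ P₁)
    (hpres : ∀ x ∈ P₁, ∀ C : Finset P, FinCoverIn P₁ x C → FinCover x C)
    (F : Set P) (hF : MeetFilter F)
    (htight : ∀ x ∈ F, ∀ C : Finset P, FinCover x C → ∃ c ∈ C, c ∈ F)
    (hne : (F ∩ P₁).Nonempty) :
    MeetFilterIn P₁ (F ∩ P₁) ∧
      ∀ x ∈ F ∩ P₁, ∀ C : Finset P, FinCoverIn P₁ x C → ∃ c ∈ C, c ∈ F ∩ P₁ := by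
  obtain ⟨_, hpr, hup, hm⟩ := hF
  refine ⟨⟨Set.inter_subset_right, hne, ?_, ?_, ?_⟩, ?_⟩
  · intro h
    have hb : (⊥ : P) ∈ F ∩ P₁ := by rw [h]; exact hbot
    exact hpr (Set.eq_univ_of_forall fun y => hup ⊥ hb.1 y bot_le)
  · intro x hx z hz hxz
    exact ⟨hup x hx.1 z hxz, hz⟩
  · intro x hx y hy
    exact ⟨hm x hx.1 y hy.1, hinf x hx.2 y hy.2⟩
  · intro x hx C hC
    obtain ⟨c, hc, hcF⟩ := htight x hx.1 C (hpres x hx.2 C hC)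
    exact ⟨c, hc, hcF, hC.1 hc⟩
end

section
/- Let P be a meet-semilattice with least element 0. Let w, z ∈ P with w ≤ z, and let z₁, …, zₙ ∈ P with zᵢ ≤ z and zᵢ ⊓ w = 0 for all i, such that {z₁, …, zₙ, w} is a finite cover of z. Then for every tight filter ξ of P: w ∈ ξ if and only if z ∈ ξ and zᵢ ∉ ξ for all i ∈ {1, …, n}. -/
theorem stmt5 {P : Type*} [SemilatticeInf P] [OrderBot P] [DecidableEq P]
    (w z : P) (hwz : w ≤ z) (C : Finset P)
    (hC : ∀ c ∈ C, c ≤ z ∧ c ⊓ w = ⊥)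
    (hcov : FinCover z (insert w C))
    (ξ : Set P) (hξ : MeetFilter ξ)
    (htight : ∀ x ∈ ξ, ∀ D : Finset P, FinCover x D → ∃ c ∈ D, c ∈ ξ) :
    w ∈ ξ ↔ z ∈ ξ ∧ ∀ c ∈ C, c ∉ ξ := by
  obtain ⟨_, hne, hup, hinf⟩ := hξ
  constructor
  · intro hw
    refine ⟨hup w hw z hwz, fun c hc hcξ => hne ?_⟩
    have hbot : (⊥ : P) ∈ ξ := (hC c hc).2 ▸ hinf c hcξ w hw
    exact Set.eq_univ_of_forall fun y => hup ⊥ hbot y bot_le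
  · rintro ⟨hz, hn⟩
    obtain ⟨c, hc, hcξ⟩ := htight z hz _ hcov
    rcases Finset.mem_insert.1 hc with h | h
    · exact h ▸ hcξ
    · exact absurd hcξ (hn c h)
end

section
/- Let S be an inverse semigroup with zero, purely graded by a group G via φ : S \ {0} → G. Let x be a nonzero idempotent of S and let s, t ∈ S \ {0} with φ(s) = φ(t), x·(s*·s) = x, and x·(t*·t) = x. Then s·x·s* = t·x·t*. -/
theorem stmt7 {S G : Type*} [SemigroupWithZero S] [Group G]
    -- the generalized-inverse operation of the inverse semigroup `S`
    (istar : S → S)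
    (hinv1 : ∀ s : S, s * istar s * s = s)
    (hinv2 : ∀ s : S, istar s * s * istar s = istar s)
    (hcomm : ∀ e f : S, e * e = e → f * f = f → e * f = f * e)
    -- pure grading of `S` by `G`
    (φ : S → G)
    (hgr : ∀ a b : S, a ≠ 0 → b ≠ 0 → a * b ≠ 0 → φ (a * b) = φ a * φ b)
    (hpure : ∀ s : S, s ≠ 0 → (φ s = 1 ↔ s * s = s))
    -- data of the statement
    (x s t : S) (hx : x * x = x) (hx0 : x ≠ 0)
    (hs0 : s ≠ 0) (ht0 : t ≠ 0) (hst : φ s = φ t)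
    (hxs : x * (istar s * s) = x) (hxt : x * (istar t * t) = x) :
    s * x * istar s = t * x * istar t := by
  have key : ∀ a b : S, a ≠ 0 → b ≠ 0 → φ a = φ b → x * (istar a * a) = x →
      x * (istar b * b) = x → (a * x * istar b) * (a * x * istar b) = a * x * istar b := by
    intro a b ha hb hab hxa hxb
    have ea : (istar a * a) * (istar a * a) = istar a * a := by
      rw [← mul_assoc, hinv2]
    have eb : (b * istar b) * (b * istar b) = b * istar b := by
      rw [← mul_assoc, hinv1]
    have hax : istar a * a * x = x := by rw [hcomm _ _ ea hx, hxa]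
    have hax0 : a * x ≠ 0 := by
      intro h
      apply hx0
      rw [← hax, mul_assoc, h, mul_zero]
    have hp0 : a * x * istar b ≠ 0 := by
      intro h
      apply hax0
      calc a * x = a * (x * (istar b * b)) := by rw [hxb]
        _ = a * x * istar b * b := by simp only [mul_assoc]
        _ = 0 := by rw [h, zero_mul]
    have hb'0 : istar b ≠ 0 := by
      intro h
      apply hp0
      rw [h, mul_zero]
    have hbb0 : b * istar b ≠ 0 := by
      intro h
      apply hb
      rw [← hinv1 b, h, zero_mul]
    have h1 : φ b * φ (istar b) = 1 := by
      rw [← hgr _ _ hb hb'0 hbb0]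
      exact (hpure _ hbb0).2 eb
    refine (hpure _ hp0).1 ?_
    rw [hgr _ _ hax0 hb'0 hp0, hgr _ _ ha hx0 hax0, (hpure x hx0).2 hx, mul_one, hab, h1]
  have prod : ∀ a b : S, x * (istar b * b) = x →
      (a * x * istar b) * (b * x * istar a) = a * x * istar a := by
    intro a b hxb
    calc (a * x * istar b) * (b * x * istar a)
        = a * ((x * (istar b * b)) * x) * istar a := by simp only [mul_assoc]
      _ = a * x * istar a := by rw [hxb, hx]
  rw [← prod s t hxt, ← prod t s hxs]
  exact hcomm _ _ (key s t hs0 ht0 hst hxs hxt) (key t s ht0 hs0 hst.symm hxt hxs)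
end

section
/- Let S be an inverse semigroup with zero, purely graded by a group G via φ : S \ {0} → G, and let g, h ∈ G. Then E_g ∩ E_{g·h} = {u·x·u* : u ∈ S \ {0}, φ(u) = g, x a nonzero idempotent with x·(u*·u) = x and x ∈ E_{g⁻¹} ∩ E_h} ∪ {0}. In other words, the partial action φ_g : x ↦ u·x·u* maps E_{g⁻¹} ∩ E_h onto E_g ∩ E_{g·h}. -/
/-- For a pure grading `φ` of an inverse semigroup `S` (with generalized-inverse
operation `istar`) by a group `G`, `Eg istar φ g` is the set
`{x ∈ E : x ≤ s·s*` for some nonzero `s` with `φ s = g} ∪ {0}`,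
where `x ≤ e` for idempotents means `x·e = x`. -/
def Eg {S G : Type*} [SemigroupWithZero S] [Group G]
    (istar : S → S) (φ : S → G) (g : G) : Set S :=
  {x | x = 0 ∨ (x * x = x ∧ x ≠ 0 ∧ ∃ s : S, s ≠ 0 ∧ φ s = g ∧ x * (s * istar s) = x)}

theorem inv_unique_aux {S : Type*} [SemigroupWithZero S]
    (hcomm : ∀ e f : S, e * e = e → f * f = f → e * f = f * e)
    (a b c : S) (h1 : a * b * a = a) (h2 : b * a * b = b)
    (h3 : a * c * a = a) (h4 : c * a * c = c) : b = c := by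
  have hba : (b * a) * (b * a) = b * a := by rw [← mul_assoc, h2]
  have hca : (c * a) * (c * a) = c * a := by rw [← mul_assoc, h4]
  have hab : (a * b) * (a * b) = a * b := by rw [← mul_assoc, h1]
  have hac : (a * c) * (a * c) = a * c := by rw [← mul_assoc, h3]
  have e1 : b = c * a * b := by
    calc b = b * (a * c * a) * b := by rw [h3, h2]
      _ = (b * a) * (c * a) * b := by simp only [mul_assoc]
      _ = (c * a) * (b * a) * b := by rw [hcomm _ _ hba hca]
      _ = c * a * (b * a * b) := by simp only [mul_assoc]
      _ = c * a * b := by rw [h2]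
  have e2 : c = c * a * b := by
    calc c = c * (a * b * a) * c := by rw [h1, h4]
      _ = c * ((a * b) * (a * c)) := by simp only [mul_assoc]
      _ = c * ((a * c) * (a * b)) := by rw [hcomm _ _ hab hac]
      _ = (c * a * c) * a * b := by simp only [mul_assoc]
      _ = c * a * b := by rw [h4]
  rw [e1, ← e2]

theorem stmt9 {S G : Type*} [SemigroupWithZero S] [Group G]
    (istar : S → S)
    (hinv1 : ∀ s : S, s * istar s * s = s)
    (hinv2 : ∀ s : S, istar s * s * istar s = istar s)
    (hcomm : ∀ e f : S, e * e = e → f * f = f → e * f = f * e)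
    (φ : S → G)
    (hgr : ∀ a b : S, a ≠ 0 → b ≠ 0 → a * b ≠ 0 → φ (a * b) = φ a * φ b)
    (hpure : ∀ s : S, s ≠ 0 → (φ s = 1 ↔ s * s = s))
    (g h : G) :
    Eg istar φ g ∩ Eg istar φ (g * h) =
      {y : S | y = 0 ∨ ∃ u x : S, u ≠ 0 ∧ φ u = g ∧ x * x = x ∧ x ≠ 0 ∧
        x * (istar u * u) = x ∧ x ∈ Eg istar φ g⁻¹ ∧ x ∈ Eg istar φ h ∧
        y = u * x * istar u} := by
  have hLi : ∀ s : S, (s * istar s) * (s * istar s) = s * istar s := fun s => by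
    rw [← mul_assoc, hinv1]
  have hRi : ∀ s : S, (istar s * s) * (istar s * s) = istar s * s := fun s => by
    rw [← mul_assoc, hinv2]
  have hss : ∀ s : S, istar (istar s) = s := fun s =>
    inv_unique_aux hcomm (istar s) _ _ (hinv1 _) (hinv2 _) (hinv2 s) (hinv1 s)
  have hmul : ∀ a b : S, istar (a * b) = istar b * istar a := fun a b => by
    refine inv_unique_aux hcomm (a * b) _ _ (hinv1 _) (hinv2 _) ?_ ?_
    · calc a * b * (istar b * istar a) * (a * b)
          = a * ((b * istar b) * (istar a * a)) * b := by simp only [mul_assoc]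
        _ = a * ((istar a * a) * (b * istar b)) * b := by rw [hcomm _ _ (hLi b) (hRi a)]
        _ = (a * istar a * a) * (b * istar b * b) := by simp only [mul_assoc]
        _ = a * b := by rw [hinv1, hinv1]
    · calc istar b * istar a * (a * b) * (istar b * istar a)
          = istar b * ((istar a * a) * (b * istar b)) * istar a := by simp only [mul_assoc]
        _ = istar b * ((b * istar b) * (istar a * a)) * istar a := by
            rw [hcomm _ _ (hLi b) (hRi a)]
        _ = (istar b * b * istar b) * (istar a * a * istar a) := by simp only [mul_assoc]
        _ = istar b * istar a := by rw [hinv2, hinv2]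
  have hne : ∀ s : S, s ≠ 0 → istar s ≠ 0 := fun s hs h0 => hs (by
    rw [← hinv1 s, h0, mul_zero, zero_mul])
  have hne2 : ∀ s : S, s ≠ 0 → s * istar s ≠ 0 := fun s hs h0 => hs (by
    rw [← hinv1 s, h0, zero_mul])
  have hφ : ∀ s : S, s ≠ 0 → φ (istar s) = (φ s)⁻¹ := fun s hs => by
    have h1 := (hpure _ (hne2 s hs)).2 (hLi s)
    rw [hgr s _ hs (hne s hs) (hne2 s hs)] at h1
    exact (inv_eq_of_mul_eq_one_right h1).symm
  ext y
  simp only [Set.mem_inter_iff, Set.mem_setOf_eq]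
  constructor
  · rintro ⟨hy1, hy2⟩
    by_cases hy0 : y = 0
    · exact Or.inl hy0
    right
    obtain ⟨hyy, -, s, hs0, hsg, hys⟩ := hy1.resolve_left hy0
    obtain ⟨-, -, t, ht0, htg, hyt⟩ := hy2.resolve_left hy0
    have hsy : s * istar s * y = y := by rw [hcomm _ _ (hLi s) hyy, hys]
    have hback : y = s * (istar s * y * s) * istar s := by
      calc y = (s * istar s * y) * (s * istar s) := by rw [hsy, hys]
        _ = _ := by simp only [mul_assoc]
    have hx0 : istar s * y * s ≠ 0 := fun h0 => hy0 (by
      rw [hback, h0, mul_zero, zero_mul])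
    have hxx : (istar s * y * s) * (istar s * y * s) = istar s * y * s := by
      calc _ = istar s * (y * (s * istar s)) * y * s := by simp only [mul_assoc]
        _ = istar s * (y * y) * s := by rw [hys]; simp only [mul_assoc]
        _ = _ := by rw [hyy]
    have hxs : (istar s * y * s) * (istar s * s) = istar s * y * s := by
      calc _ = istar s * y * (s * istar s * s) := by simp only [mul_assoc]
        _ = _ := by rw [hinv1]
    have hxw : (istar s * y * s) * ((istar s * t) * istar (istar s * t))
        = istar s * y * s := by
      rw [hmul, hss]
      calc _ = istar s * (y * (s * istar s) * (t * istar t)) * s := by simp only [mul_assoc]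
        _ = _ := by rw [hys, hyt]
    have hw0 : istar s * t ≠ 0 := fun h0 => hx0 (by
      rw [← hxw, h0, zero_mul, mul_zero])
    refine ⟨s, istar s * y * s, hs0, hsg, hxx, hx0, hxs, Or.inr ⟨hxx, hx0, istar s, hne s hs0,
      by rw [hφ s hs0, hsg], by rw [hss, hxs]⟩, Or.inr ⟨hxx, hx0, istar s * t, hw0, ?_, hxw⟩,
      hback⟩
    rw [hgr _ _ (hne s hs0) ht0 hw0, hφ s hs0, hsg, htg, inv_mul_cancel_left]
  · rintro (rfl | ⟨u, x, hu0, hug, hxx, hx0, hxu, -, hxh, rfl⟩)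
    · exact ⟨Or.inl rfl, Or.inl rfl⟩
    obtain ⟨-, -, t, ht0, hth, hxt⟩ := hxh.resolve_left hx0
    have hux : istar u * u * x = x := by rw [hcomm _ _ (hRi u) hxx, hxu]
    have hback : x = istar u * (u * x * istar u) * u := by
      calc x = (istar u * u * x) * (istar u * u) := by rw [hux, hxu]
        _ = _ := by simp only [mul_assoc]
    have hy0 : u * x * istar u ≠ 0 := fun h0 => hx0 (by
      rw [hback, h0, mul_zero, zero_mul])
    have hyy : (u * x * istar u) * (u * x * istar u) = u * x * istar u := by
      calc _ = u * (x * (istar u * u)) * x * istar u := by simp only [mul_assoc]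
        _ = u * (x * x) * istar u := by rw [hxu]; simp only [mul_assoc]
        _ = _ := by rw [hxx]
    have hyu : (u * x * istar u) * (u * istar u) = u * x * istar u := by
      calc _ = u * x * (istar u * u * istar u) := by simp only [mul_assoc]
        _ = _ := by rw [hinv2]
    have hyw : (u * x * istar u) * ((u * t) * istar (u * t)) = u * x * istar u := by
      rw [hmul]
      calc _ = u * (x * (istar u * u) * (t * istar t)) * istar u := by simp only [mul_assoc]
        _ = _ := by rw [hxu, hxt]
    have hw0 : u * t ≠ 0 := fun h0 => hy0 (by
      rw [← hyw, h0, zero_mul, mul_zero])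
    exact ⟨Or.inr ⟨hyy, hy0, u, hu0, hug, hyu⟩, Or.inr ⟨hyy, hy0, u * t, hw0,
      by rw [hgr _ _ hu0 ht0 hw0, hug, hth], hyw⟩⟩
end

section
/- Let S be an inverse semigroup with zero, purely graded by a group G via φ : S \ {0} → G. Let s, t, u ∈ S \ {0} with φ(u) = φ(s)·φ(t), and let x be a nonzero idempotent with x·(t*·t) = x, (t·x·t*)·(s*·s) = t·x·t*, and x·(u*·u) = x. Then s·(t·x·t*)·s* = u·x·u*. (This is the cocycle identity φ_{φ(s)}(φ_{φ(t)}(x)) = φ_{φ(s)·φ(t)}(x) for the partial action on idempotents.) -/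
theorem left_ne_zero_of_mul_aux {S : Type*} [SemigroupWithZero S] {a b : S} (h : a * b ≠ 0) :
    a ≠ 0 := by
  rintro rfl
  simp at h

theorem stmt10 {S G : Type*} [SemigroupWithZero S] [Group G]
    (istar : S → S)
    (hinv1 : ∀ s : S, s * istar s * s = s)
    (hinv2 : ∀ s : S, istar s * s * istar s = istar s)
    (hcomm : ∀ e f : S, e * e = e → f * f = f → e * f = f * e)
    (φ : S → G)
    (hgr : ∀ a b : S, a ≠ 0 → b ≠ 0 → a * b ≠ 0 → φ (a * b) = φ a * φ b)
    (hpure : ∀ s : S, s ≠ 0 → (φ s = 1 ↔ s * s = s))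
    (s t u : S) (hs0 : s ≠ 0) (ht0 : t ≠ 0) (hu0 : u ≠ 0)
    (hu : φ u = φ s * φ t)
    (x : S) (hx : x * x = x) (hx0 : x ≠ 0)
    (hxt : x * (istar t * t) = x)
    (htxs : (t * x * istar t) * (istar s * s) = t * x * istar t)
    (hxu : x * (istar u * u) = x) :
    s * (t * x * istar t) * istar s = u * x * istar u := by
  have gr : ∀ a b : S, a * b ≠ 0 → φ (a * b) = φ a * φ b := by
    intro a b h
    refine hgr a b ?_ ?_ h
    · rintro rfl; simp at h
    · rintro rfl; simp at h
  have hst : ∀ a : S, a ≠ 0 → φ (istar a) = (φ a)⁻¹ := by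
    intro a ha
    have h0 : a * istar a ≠ 0 := by
      intro h
      apply ha
      rw [← hinv1 a, h, zero_mul]
    have h1 : φ (a * istar a) = 1 := by
      rw [hpure _ h0, ← mul_assoc, hinv1]
    rw [gr _ _ h0] at h1
    exact (inv_eq_of_mul_eq_one_right h1).symm
  have hφx : φ x = 1 := (hpure x hx0).2 hx
  have htt : istar t * t * x = x := by
    rw [← hcomm x (istar t * t) hx (by rw [← mul_assoc, hinv2]), hxt]
  have h1 : x * istar t * (istar s * s) = x * istar t := by
    have := congrArg (istar t * ·) htxs
    simp only [← mul_assoc] at this htt ⊢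
    simpa only [htt] using this
  have ha : x * istar t * istar s * (s * t * x) = x := by
    calc _ = (x * istar t * (istar s * s)) * t * x := by simp only [mul_assoc]
      _ = (x * (istar t * t)) * x := by rw [h1]; simp only [mul_assoc]
      _ = x := by rw [hxt, hx]
  have hb : x * istar u * (u * x) = x := by
    calc _ = (x * (istar u * u)) * x := by simp only [mul_assoc]
      _ = x := by rw [hxu, hx]
  have hc0 : u * x * istar t * istar s ≠ 0 := by
    intro h
    apply hx0
    calc x = (x * istar u * (u * x)) * (x * istar t * istar s * (s * t * x)) := by
            rw [ha, hb, hx]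
      _ = x * istar u * (u * (x * x) * istar t * istar s) * (s * t * x) := by
            simp only [mul_assoc]
      _ = 0 := by rw [hx, h]; simp
  have hd0 : s * t * x * istar u ≠ 0 := by
    intro h
    apply hx0
    calc x = (x * istar t * istar s * (s * t * x)) * (x * istar u * (u * x)) := by
            rw [ha, hb, hx]
      _ = x * istar t * istar s * (s * t * (x * x) * istar u) * (u * x) := by
            simp only [mul_assoc]
      _ = 0 := by rw [hx, h]; simp
  have hc := (hpure _ hc0).1 (by
    have e1 := left_ne_zero_of_mul_aux hc0
    have e2 := left_ne_zero_of_mul_aux e1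
    rw [gr _ _ hc0, gr _ _ e1, gr _ _ e2, hφx, hst t ht0, hst s hs0, hu]
    group)
  have hd := (hpure _ hd0).1 (by
    have e1 := left_ne_zero_of_mul_aux hd0
    have e2 := left_ne_zero_of_mul_aux e1
    rw [gr _ _ hd0, gr _ _ e1, gr _ _ e2, hφx, hst u hu0, hu]
    group)
  calc s * (t * x * istar t) * istar s
      = s * t * (x * x) * istar t * istar s := by rw [hx]; simp only [mul_assoc]
    _ = s * t * x * (x * istar u * (u * x)) * (x * istar t * istar s) := by
        rw [hb]
        simp only [mul_assoc]
        simp only [← mul_assoc x x, hx]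
    _ = (s * t * x * istar u) * (u * x * istar t * istar s) := by
        simp only [mul_assoc]
        simp only [← mul_assoc x x, hx]
    _ = (u * x * istar t * istar s) * (s * t * x * istar u) := hcomm _ _ hd hc
    _ = u * (x * istar t * istar s * (s * t * x)) * istar u := by simp only [mul_assoc]
    _ = u * x * istar u := by rw [ha]
end
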